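/- Let R be a commutative semiring and M an R-module, with dual M^∨ = Hom_R(M, R) and evaluation map ε : M ⊗_R M^∨ → R, m ⊗ χ ↦ χ(m). Then M is finitely generated and projective if and only if there exists an R-linear map η : R → M^∨ ⊗_R M satisfying the triangle identities: the composite M ≅ M ⊗ R → M ⊗ M^∨ ⊗ M → R ⊗ M ≅ M (using 1⊗η then ε⊗1) is the identity of M, and the composite M^∨ ≅ R ⊗ M^∨ → M^∨ ⊗ M ⊗ M^∨ → M^∨ ⊗ R ≅ M^∨ (using η⊗1 then 1⊗ε) is the identity of M^∨. (That is, M is dualizable iff M is finitely generated projective.) -/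

import Mathlib

/-!
A linear map `η : R → M^∨ ⊗ M` is the same as a tensor `t = η 1 = ∑ χᵢ ⊗ mᵢ`, and `t` determines the
endomorphism `e = dualTensorHom t : m ↦ ∑ χᵢ m • mᵢ` of `M`. The first triangle composite is `e`
(`triangle_left_apply`) and the second is its transpose `ψ ↦ ψ ∘ e` (`triangle_right_apply`), so
both identities together say just that `e = id`. Such a `t` exists iff `M` is finitely generated
projective: this is the dual basis lemma (`finite_projective_iff_exists_dualTensorHom_eq_id`),
where the `χᵢ` and the `mᵢ` are the components of a retraction of some `R^n` onto `M`. No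
subtraction is involved, so the argument works over semirings.
-/

/-!
Over a commutative semiring, a module is dualizable (there is a unit map `η` which,
together with the evaluation map `ε`, satisfies the triangle identities) iff it is
finitely generated and projective.
-/

universe u

open TensorProduct

variable (R : Type u) [CommSemiring R] (M : Type u) [AddCommMonoid M] [Module R M]

/-- The evaluation (counit) map `ε : M ⊗ M^∨ → R`, `m ⊗ χ ↦ χ m`. -/
noncomputable def evalCounit : (M ⊗[R] (M →ₗ[R] R)) →ₗ[R] R :=
  TensorProduct.lift (LinearMap.id : (M →ₗ[R] R) →ₗ[R] (M →ₗ[R] R)).flip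

/-- The first triangle composite for `t = η 1` is the endomorphism of `M` represented by `t`: if
`t = ∑ χᵢ ⊗ mᵢ`, it sends `m` to `∑ χᵢ m • mᵢ`. -/
theorem triangle_left_apply (t : (M →ₗ[R] R) ⊗[R] M) (m : M) :
    TensorProduct.lid R M (LinearMap.rTensor M (evalCounit R M)
      ((TensorProduct.assoc R M (M →ₗ[R] R) M).symm (m ⊗ₜ[R] t))) =
      dualTensorHom R M M t m := by
  induction t using TensorProduct.induction_on with
  | zero => simp
  | tmul χ n => simp [evalCounit]
  | add x y hx hy => simp only [TensorProduct.tmul_add, map_add, hx, hy, LinearMap.add_apply]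

/-- The second triangle composite for `t = η 1` is the transpose `ψ ↦ ψ ∘ e` of the endomorphism
`e` of `M` represented by `t`. -/
theorem triangle_right_apply (t : (M →ₗ[R] R) ⊗[R] M) (ψ : M →ₗ[R] R) :
    TensorProduct.rid R (M →ₗ[R] R) (LinearMap.lTensor (M →ₗ[R] R) (evalCounit R M)
      (TensorProduct.assoc R (M →ₗ[R] R) M (M →ₗ[R] R) (t ⊗ₜ[R] ψ))) =
      ψ.comp (dualTensorHom R M M t) := by
  induction t using TensorProduct.induction_on with
  | zero => simp
  | tmul χ n =>
    ext m
    simp [evalCounit, mul_comm]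
  | add x y hx hy =>
    simp only [TensorProduct.add_tmul, map_add, hx, hy, LinearMap.comp_add]

/-- The dual basis lemma: a module is finitely generated projective iff its identity is a finite
sum of rank-one endomorphisms `m ↦ χ m • n`. -/
theorem finite_projective_iff_exists_dualTensorHom_eq_id :
    (Module.Finite R M ∧ Module.Projective R M) ↔
      ∃ t : (M →ₗ[R] R) ⊗[R] M, dualTensorHom R M M t = LinearMap.id := by
  constructor
  · rintro ⟨_, _⟩
    obtain ⟨n, f, g, -, -, hfg⟩ := Module.Finite.exists_comp_eq_id_of_projective R M
    refine ⟨∑ i, ((LinearMap.proj i).comp g) ⊗ₜ[R] f (Pi.single i 1), ?_⟩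
    ext m
    have hm : f (g m) = m := LinearMap.congr_fun hfg m
    conv_rhs => rw [LinearMap.id_apply, ← hm, pi_eq_sum_univ' (g m)]
    simp [LinearMap.sum_apply]
  · rintro ⟨t, ht⟩
    obtain ⟨n, χ, v, rfl⟩ := TensorProduct.exists_sum_tmul_eq t
    have hs : (Fintype.linearCombination R v).comp (LinearMap.pi χ) = LinearMap.id := by
      rw [← ht]
      ext m
      simp [Fintype.linearCombination_apply, LinearMap.sum_apply]
    exact ⟨Module.Finite.of_surjective (Fintype.linearCombination R v)
        fun m => ⟨LinearMap.pi χ m, LinearMap.congr_fun hs m⟩,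
      Module.Projective.of_split _ _ hs⟩

/-- **Dualizable = finitely generated projective** over a commutative semiring:
`M` is finitely generated projective iff there is a unit map
`η : R → M^∨ ⊗ M` satisfying the two triangle identities with the evaluation map
`ε : M ⊗ M^∨ → R`. -/
theorem finite_projective_iff_dualizable :
    (Module.Finite R M ∧ Module.Projective R M) ↔
      ∃ η : R →ₗ[R] ((M →ₗ[R] R) ⊗[R] M),
        -- first triangle identity: M ≅ M ⊗ R → M ⊗ M^∨ ⊗ M → R ⊗ M ≅ M is the identity
        ((TensorProduct.lid R M).toLinearMap.comp
          ((LinearMap.rTensor M (evalCounit R M)).comp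
            ((TensorProduct.assoc R M (M →ₗ[R] R) M).symm.toLinearMap.comp
              ((LinearMap.lTensor M η).comp
                (TensorProduct.rid R M).symm.toLinearMap))) = LinearMap.id) ∧
        -- second triangle identity: M^∨ ≅ R ⊗ M^∨ → M^∨ ⊗ M ⊗ M^∨ → M^∨ ⊗ R ≅ M^∨
        ((TensorProduct.rid R (M →ₗ[R] R)).toLinearMap.comp
          ((LinearMap.lTensor (M →ₗ[R] R) (evalCounit R M)).comp
            ((TensorProduct.assoc R (M →ₗ[R] R) M (M →ₗ[R] R)).toLinearMap.comp
              ((LinearMap.rTensor (M →ₗ[R] R) η).comp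
                (TensorProduct.lid R (M →ₗ[R] R)).symm.toLinearMap))) = LinearMap.id) := by
  rw [finite_projective_iff_exists_dualTensorHom_eq_id]
  constructor
  · rintro ⟨t, ht⟩
    refine ⟨LinearMap.toSpanSingleton R _ t, LinearMap.ext fun m => ?_,
      LinearMap.ext fun ψ => ?_⟩
    · simpa [ht] using triangle_left_apply R M t m
    · simpa [ht] using triangle_right_apply R M t ψ
  · rintro ⟨η, h, -⟩
    refine ⟨η 1, LinearMap.ext fun m => ?_⟩
    rw [← triangle_left_apply]
    simpa using LinearMap.congr_fun h m
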